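/- There exist unique ℚ-algebra homomorphisms Z̄^{*̄} : (H^1, *̄) → ℝ[T] and Z̄^{ш̄} : (H^1, ш̄) → ℝ[T] that both extend the n-evaluation map Z̄ : H^0 → ℝ and send y to T. -/

import Mathlib

open scoped BigOperators

/-- The two-letter alphabet {x, y}. -/
inductive Letter : Type
  | x : Letter
  | y : Letter
deriving DecidableEq

/-- `H = ℚ⟨x,y⟩`, the noncommutative polynomial ring over ℚ in two
indeterminates, realized as the monoid algebra of the free monoid on `{x,y}`. -/
abbrev H : Type := MonoidAlgebra ℚ (FreeMonoid Letter)

namespace H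

/-- The monomial (word) of `H` corresponding to an element of the free monoid. -/
noncomputable def word (w : FreeMonoid Letter) : H := MonoidAlgebra.single w 1

/-- The generator `x`. -/
noncomputable def X : H := word (FreeMonoid.of Letter.x)

/-- The generator `y`. -/
noncomputable def Y : H := word (FreeMonoid.of Letter.y)

/-- The word `z_k = x^{k-1} y` (for `k ≥ 1`). -/
def zW (k : ℕ) : FreeMonoid Letter :=
  FreeMonoid.ofList (List.replicate (k - 1) Letter.x ++ [Letter.y])

/-- `z_k = x^{k-1} y` as an element of `H`. -/
noncomputable def z (k : ℕ) : H := word (zW k)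

/-- A list `[k₁,…,kₙ]` gives the word `z_{k₁} z_{k₂} ⋯ z_{kₙ}`. -/
def zListW (ks : List ℕ) : FreeMonoid Letter :=
  FreeMonoid.ofList (ks.flatMap fun k => List.replicate (k - 1) Letter.x ++ [Letter.y])

/-- `H¹ = ℚ + Hy` as a ℚ-submodule of `H`. -/
noncomputable def H1 : Submodule ℚ H :=
  LinearMap.range (LinearMap.mulRight ℚ Y) ⊔ Submodule.span ℚ {1}

/-- `H⁰ = ℚ + xHy` as a ℚ-submodule of `H`. -/
noncomputable def H0 : Submodule ℚ H :=
  LinearMap.range ((LinearMap.mulRight ℚ Y).comp (LinearMap.mulLeft ℚ X)) ⊔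
    Submodule.span ℚ {1}

/-- Parse a word of `H¹` into the exponent list of its `z`-decomposition:
`z_{k₁}⋯z_{kₙ} ↦ [k₁,…,kₙ]` (auxiliary accumulator version). -/
def toZAux : List Letter → ℕ → List ℕ
  | [], _ => []
  | Letter.x :: r, n => toZAux r (n + 1)
  | Letter.y :: r, n => (n + 1) :: toZAux r 0

/-- The `z`-decomposition of a word of `H¹`. -/
def toZ (w : FreeMonoid Letter) : List ℕ := toZAux (FreeMonoid.toList w) 0

/-- The harmonic product on words of `H¹` (via `z`-decompositions):
`1 * w = w * 1 = w` and
`z_k w₁ * z_l w₂ = z_k (w₁ * z_l w₂) + z_l (z_k w₁ * w₂) + z_{k+l} (w₁ * w₂)`. -/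
noncomputable def harmW : List ℕ → List ℕ → H
  | [], w => word (zListW w)
  | k :: w1, [] => word (zListW (k :: w1))
  | k :: w1, l :: w2 =>
      z k * harmW w1 (l :: w2) + z l * harmW (k :: w1) w2 + z (k + l) * harmW w1 w2
termination_by w1 w2 => w1.length + w2.length
decreasing_by all_goals simp [Nat.lt_succ_iff] <;> omega

/-- The n-harmonic product on words of `H¹`:
`1 *̄ w = w *̄ 1 = w` and
`z_k w₁ *̄ z_l w₂ = z_k (w₁ *̄ z_l w₂) + z_l (z_k w₁ *̄ w₂) − z_{k+l} (w₁ *̄ w₂)`. -/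
noncomputable def nharmW : List ℕ → List ℕ → H
  | [], w => word (zListW w)
  | k :: w1, [] => word (zListW (k :: w1))
  | k :: w1, l :: w2 =>
      z k * nharmW w1 (l :: w2) + z l * nharmW (k :: w1) w2 - z (k + l) * nharmW w1 w2
termination_by w1 w2 => w1.length + w2.length
decreasing_by all_goals simp [Nat.lt_succ_iff] <;> omega

/-- The harmonic product `*` on `H¹`, extended ℚ-bilinearly. -/
noncomputable def harm (a b : H) : H :=
  Finsupp.sum a.coeff fun w1 c1 =>
    Finsupp.sum b.coeff fun w2 c2 => (c1 * c2) • harmW (toZ w1) (toZ w2)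

/-- The n-harmonic product `*̄` on `H¹`, extended ℚ-bilinearly. -/
noncomputable def nharm (a b : H) : H :=
  Finsupp.sum a.coeff fun w1 c1 =>
    Finsupp.sum b.coeff fun w2 c2 => (c1 * c2) • nharmW (toZ w1) (toZ w2)

/-- The letter exchange `τ(x) = y`, `τ(y) = x`. -/
def τ : Letter → Letter
  | Letter.x => Letter.y
  | Letter.y => Letter.x

/-- `δ(w) = 1` if `w` is the empty word, `0` otherwise. -/
def δ : List Letter → ℚ
  | [] => 1
  | _ :: _ => 0

/-- The shuffle product on words:
`1 ш w = w ш 1 = w` and `u₁w₁ ш u₂w₂ = u₁(w₁ ш u₂w₂) + u₂(u₁w₁ ш w₂)`. -/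
noncomputable def shW : List Letter → List Letter → H
  | [], w => word (FreeMonoid.ofList w)
  | u :: w, [] => word (FreeMonoid.ofList (u :: w))
  | u1 :: w1, u2 :: w2 =>
      word (FreeMonoid.of u1) * shW w1 (u2 :: w2) +
        word (FreeMonoid.of u2) * shW (u1 :: w1) w2
termination_by w1 w2 => w1.length + w2.length
decreasing_by all_goals simp [Nat.lt_succ_iff]

/-- The n-shuffle product on words: `1 ш̄ w = w ш̄ 1 = w` and
`u₁w₁ ш̄ u₂w₂ = u₁(w₁ ш̄ u₂w₂) + u₂(u₁w₁ ш̄ w₂) − δ(w₁)τ(u₁)u₂w₂ − δ(w₂)τ(u₂)u₁w₁`. -/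
noncomputable def nshW : List Letter → List Letter → H
  | [], w => word (FreeMonoid.ofList w)
  | u :: w, [] => word (FreeMonoid.ofList (u :: w))
  | u1 :: w1, u2 :: w2 =>
      word (FreeMonoid.of u1) * nshW w1 (u2 :: w2) +
        word (FreeMonoid.of u2) * nshW (u1 :: w1) w2 -
        δ w1 • word (FreeMonoid.ofList (τ u1 :: u2 :: w2)) -
        δ w2 • word (FreeMonoid.ofList (τ u2 :: u1 :: w1))
termination_by w1 w2 => w1.length + w2.length
decreasing_by all_goals simp [Nat.lt_succ_iff]

/-- The shuffle product `ш` on `H`, extended ℚ-bilinearly. -/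
noncomputable def sh (a b : H) : H :=
  Finsupp.sum a.coeff fun w1 c1 =>
    Finsupp.sum b.coeff fun w2 c2 =>
      (c1 * c2) • shW (FreeMonoid.toList w1) (FreeMonoid.toList w2)

/-- The n-shuffle product `ш̄` on `H`, extended ℚ-bilinearly. -/
noncomputable def nsh (a b : H) : H :=
  Finsupp.sum a.coeff fun w1 c1 =>
    Finsupp.sum b.coeff fun w2 c2 =>
      (c1 * c2) • nshW (FreeMonoid.toList w1) (FreeMonoid.toList w2)

/-- `S₁`: the ℚ-algebra endomorphism of `H` with `S₁(x) = x`, `S₁(y) = x + y`. -/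
noncomputable def S1 : H →ₐ[ℚ] H :=
  MonoidAlgebra.lift ℚ H (FreeMonoid Letter)
    (FreeMonoid.lift fun u => match u with
      | Letter.x => X
      | Letter.y => X + Y)

/-- `S₂`: the ℚ-algebra endomorphism of `H` with `S₂(x) = x`, `S₂(y) = y − x`. -/
noncomputable def S2 : H →ₐ[ℚ] H :=
  MonoidAlgebra.lift ℚ H (FreeMonoid Letter)
    (FreeMonoid.lift fun u => match u with
      | Letter.x => X
      | Letter.y => Y - X)

/-- `S` on a word: `S(1) = 1` and `S(Fy) = S₁(F)y`. -/
noncomputable def SW (w : FreeMonoid Letter) : H :=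
  match (FreeMonoid.toList w).getLast? with
  | some Letter.y =>
      S1 (word (FreeMonoid.ofList (FreeMonoid.toList w).dropLast)) * Y
  | _ => word w

/-- The ℚ-linear map `S : H¹ → H¹` with `S(1) = 1`, `S(Fy) = S₁(F)y`. -/
noncomputable def S (a : H) : H := Finsupp.sum a.coeff fun w c => c • SW w

/-- `S̃` on a word: `S̃(1) = 1` and `S̃(Fy) = S₂(F)y`. -/
noncomputable def StW (w : FreeMonoid Letter) : H :=
  match (FreeMonoid.toList w).getLast? with
  | some Letter.y =>
      S2 (word (FreeMonoid.ofList (FreeMonoid.toList w).dropLast)) * Y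
  | _ => word w

/-- The ℚ-linear map `S̃ : H¹ → H¹` with `S̃(1) = 1`, `S̃(Fy) = S₂(F)y`. -/
noncomputable def St (a : H) : H := Finsupp.sum a.coeff fun w c => c • StW w

/-- The multiple zeta value `ζ(k₁,…,kₙ)`: the sum over strictly decreasing
tuples `m₁ > m₂ > ⋯ > mₙ > 0` of `1/(m₁^{k₁}⋯mₙ^{kₙ})`. -/
noncomputable def mzeta (ks : List ℕ) : ℝ :=
  ∑' m : {f : Fin ks.length → ℕ // (∀ i, 0 < f i) ∧
      ∀ i j : Fin ks.length, i < j → f j < f i},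
    ∏ i : Fin ks.length, ((m.1 i : ℝ) ^ ks.get i)⁻¹

/-- The non-strict multiple zeta value `ζ̄(k₁,…,kₙ)`: the sum over weakly
decreasing tuples `m₁ ≥ m₂ ≥ ⋯ ≥ mₙ > 0` of `1/(m₁^{k₁}⋯mₙ^{kₙ})`. -/
noncomputable def nmzeta (ks : List ℕ) : ℝ :=
  ∑' m : {f : Fin ks.length → ℕ // (∀ i, 0 < f i) ∧
      ∀ i j : Fin ks.length, i ≤ j → f j ≤ f i},
    ∏ i : Fin ks.length, ((m.1 i : ℝ) ^ ks.get i)⁻¹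

/-- The evaluation map `Z : H⁰ → ℝ`, `Z(1) = 1`,
`Z(z_{k₁}⋯z_{kₙ}) = ζ(k₁,…,kₙ)` (extended ℚ-linearly to `H`). -/
noncomputable def Z (a : H) : ℝ := Finsupp.sum a.coeff fun w c => (c : ℝ) * mzeta (toZ w)

/-- The n-evaluation map `Z̄ : H⁰ → ℝ`, `Z̄(1) = 1`,
`Z̄(z_{k₁}⋯z_{kₙ}) = ζ̄(k₁,…,kₙ)` (extended ℚ-linearly to `H`). -/
noncomputable def Zbar (a : H) : ℝ := Finsupp.sum a.coeff fun w c => (c : ℝ) * nmzeta (toZ w)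

/-- `i`-fold n-harmonic power: `a^{*̄ 0} = 1`, `a^{*̄ (i+1)} = a *̄ a^{*̄ i}`. -/
noncomputable def nharmPow : ℕ → H → H
  | 0, _ => 1
  | i + 1, a => nharm a (nharmPow i a)

/-- `i`-fold n-shuffle power: `a^{ш̄ 0} = 1`, `a^{ш̄ (i+1)} = a ш̄ a^{ш̄ i}`. -/
noncomputable def nshPow : ℕ → H → H
  | 0, _ => 1
  | i + 1, a => nsh a (nshPow i a)

end H

open H

/-- `IsRegHom mul ev f` says the ℚ-linear map `f : H → ℝ[T]` is a ℚ-algebra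
homomorphism from `(H¹, mul)` to `ℝ[T]` which extends the evaluation map
`ev` on `H⁰` and sends `y` to `T`. -/
def IsRegHom (mul : H → H → H) (ev : H → ℝ) (f : H →ₗ[ℚ] Polynomial ℝ) : Prop :=
  (∀ a ∈ H1, ∀ b ∈ H1, f (mul a b) = f a * f b) ∧
  (∀ a ∈ H0, f a = Polynomial.C (ev a)) ∧
  f Y = Polynomial.X

/-!
A summation method (a family of weights `θ i m → 1`) turns a word `z_{k₁}⋯z_{kₙ}` into the function
of `i` obtained by weighting the terms of `ζ̄(k₁,…,kₙ)` with `m₁ = m` by `θ i m`. Ordinary partial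
sums make this assignment multiplicative for `*̄` (a Rota–Baxter identity), Abel summation
`θ t m = tᵐ` makes it multiplicative for `ш̄` (both sides have the same image under `t d/dt`).

Let `L` be the function assigned to `y`: the harmonic numbers, respectively `-log (1 - t)`.
On `H⁰` the functions converge to `Z̄` faster than every negative power of `L`. The product
of `y` with `yⁿ v`, `v ∈ H⁰`, is `(n + 1) yⁿ⁺¹ v` up to terms with fewer leading `y`s, so `H⁰`
generates `H¹` under multiplication by `y`. Hence every element of `H¹` is assigned a function
which is a polynomial in `L` up to an error that decays faster than every negative power of `L`.
That polynomial is unique, so taking it is a homomorphism, and generation by `H⁰` and `y` makes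
the homomorphism unique.
-/

namespace H

open FreeMonoid (of ofList)

/-! ### Words -/

section Words

/-- The basis of `H` consisting of the words in `x` and `y`. -/
noncomputable def wordBasis : Module.Basis (FreeMonoid Letter) ℚ H :=
  MonoidAlgebra.basis (FreeMonoid Letter) ℚ

lemma wordBasis_apply (w : FreeMonoid Letter) : wordBasis w = word w :=
  MonoidAlgebra.basis_apply _ w

lemma word_mul (v w : FreeMonoid Letter) : word v * word w = word (v * w) := by
  simp [word, MonoidAlgebra.single_mul_single]

lemma X_mul_word (l : List Letter) : X * word (ofList l) = word (ofList (Letter.x :: l)) :=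
  word_mul _ _

lemma Y_mul_word (l : List Letter) : Y * word (ofList l) = word (ofList (Letter.y :: l)) :=
  word_mul _ _

lemma span_word : Submodule.span ℚ (Set.range word) = ⊤ := by
  rw [← wordBasis.span_eq, funext wordBasis_apply]

section Constr

variable {M : Type*} [AddCommGroup M] [Module ℚ M] (φ : FreeMonoid Letter → M)

lemma constr_word (w : FreeMonoid Letter) : wordBasis.constr ℚ φ (word w) = φ w := by
  rw [← wordBasis_apply, Module.Basis.constr_basis]

lemma constr_apply_eq_sum (a : H) :
    wordBasis.constr ℚ φ a = a.coeff.sum fun w c => c • φ w := by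
  rw [Module.Basis.constr_apply]; rfl

end Constr

/-- `Hy`, the span of the words that end in `y`. -/
noncomputable def Hy : Submodule ℚ H := LinearMap.range (LinearMap.mulRight ℚ Y)

lemma Hy_eq_span : Hy = Submodule.span ℚ (Set.range fun w => word (w * of Letter.y)) := by
  rw [Hy, LinearMap.range_eq_map, ← span_word, Submodule.map_span, ← Set.range_comp]
  simp only [Function.comp_def, LinearMap.mulRight_apply, Y, word_mul]

lemma H1_eq_Hy_sup : H1 = Hy ⊔ Submodule.span ℚ {1} := rfl

lemma H0_eq_map_Hy_sup : H0 = Hy.map (LinearMap.mulLeft ℚ X) ⊔ Submodule.span ℚ {1} := by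
  rw [H0, Hy, ← LinearMap.range_comp]
  congr 2
  ext a
  simp [mul_assoc]

lemma Hy_le_H1 : Hy ≤ H1 := le_sup_left

lemma one_mem_H1 : (1 : H) ∈ H1 :=
  Submodule.mem_sup_right (Submodule.mem_span_singleton_self _)

lemma one_mem_H0 : (1 : H) ∈ H0 :=
  Submodule.mem_sup_right (Submodule.mem_span_singleton_self _)

lemma word_mem_Hy {l : List Letter} (hl : [Letter.y] <:+ l) : word (ofList l) ∈ Hy := by
  obtain ⟨l, rfl⟩ := hl
  rw [Hy_eq_span]
  exact Submodule.subset_span ⟨ofList l, rfl⟩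

lemma mul_mem_Hy (a : H) {b : H} (hb : b ∈ Hy) : a * b ∈ Hy := by
  obtain ⟨c, rfl⟩ := hb
  exact ⟨a * c, by simp [mul_assoc]⟩

lemma X_mul_mem_H0 {a : H} (ha : a ∈ Hy) : X * a ∈ H0 := by
  rw [H0_eq_map_Hy_sup]
  exact Submodule.mem_sup_left ⟨a, ha, rfl⟩

lemma mul_mem_Hy_of_mem_H1 {a b : H} (ha : a ∈ Hy) (hb : b ∈ H1) : a * b ∈ Hy := by
  obtain ⟨c, hc, d, hd, rfl⟩ := Submodule.mem_sup.1 hb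
  obtain ⟨q, rfl⟩ := Submodule.mem_span_singleton.1 hd
  rw [mul_add, mul_smul_comm, mul_one]
  exact add_mem (mul_mem_Hy a hc) (Submodule.smul_mem _ q ha)

lemma Y_mem_Hy : Y ∈ Hy := ⟨1, by simp⟩

lemma Y_mem_H1 : Y ∈ H1 := Hy_le_H1 Y_mem_Hy

/-- The words of `H¹`: the empty word and the words that end in `y`. -/
def IsH1Word (l : List Letter) : Prop := l = [] ∨ [Letter.y] <:+ l

lemma isH1Word_of_cons {u : Letter} {l : List Letter} (h : [Letter.y] <:+ u :: l) :
    IsH1Word l :=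
  (List.suffix_cons_iff.1 h).imp (fun h => (List.cons_eq_cons.1 h).2.symm) id

lemma δ_eq_zero {l : List Letter} (hl : [Letter.y] <:+ l) : δ l = 0 := by
  cases l with
  | nil => simp at hl
  | cons u l => rfl

lemma IsH1Word.y_suffix_append {l : List Letter} (hl : IsH1Word l) (l' : List Letter) :
    [Letter.y] <:+ l' ++ Letter.y :: l := by
  obtain rfl | hl := hl
  · exact List.suffix_append _ _
  · exact (hl.trans (List.suffix_cons _ _)).trans (List.suffix_append _ _)

lemma word_mem_H1 {l : List Letter} (hl : IsH1Word l) : word (ofList l) ∈ H1 := by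
  obtain rfl | hl := hl
  · exact one_mem_H1
  · exact Hy_le_H1 (word_mem_Hy hl)

lemma Hy_le {V : Submodule ℚ H} (word_mem : ∀ l, [Letter.y] <:+ l → word (ofList l) ∈ V) :
    Hy ≤ V := by
  rw [Hy_eq_span, Submodule.span_le, Set.range_subset_iff]
  exact fun w => word_mem (w.toList ++ [Letter.y]) (List.suffix_append _ _)

lemma H1_le {V : Submodule ℚ H} (word_mem : ∀ l, IsH1Word l → word (ofList l) ∈ V) :
    H1 ≤ V := by
  rw [H1_eq_Hy_sup, sup_le_iff, Submodule.span_singleton_le_iff_mem]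
  exact ⟨Hy_le fun l hl => word_mem l (.inr hl), word_mem [] (.inl rfl)⟩

lemma H0_le {V : Submodule ℚ H} (one_mem : 1 ∈ V)
    (word_mem : ∀ l, [Letter.y] <:+ l → word (ofList (Letter.x :: l)) ∈ V) : H0 ≤ V := by
  rw [H0_eq_map_Hy_sup, sup_le_iff, Submodule.map_le_iff_le_comap,
    Submodule.span_singleton_le_iff_mem]
  refine ⟨Hy_le fun l hl => ?_, one_mem⟩
  rw [Submodule.mem_comap, LinearMap.mulLeft_apply, X_mul_word]
  exact word_mem l hl

lemma H0_le_H1 : H0 ≤ H1 :=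
  H0_le one_mem_H1 fun _ hl => Hy_le_H1 (word_mem_Hy (hl.trans (List.suffix_cons _ _)))

end Words

/-! ### Generation of `H¹` from `H⁰` by multiplication by `y` -/

section Generation

/-- `InsertsY m` says that, modulo `H⁰`, the operator `m` inserts a letter `y` into the initial
block of letters `y` of a word in all possible ways. Multiplication by `y` has this property for
both products. -/
structure InsertsY (m : H →ₗ[ℚ] H) : Prop where
  sub_mem_of_mem_H0 : ∀ v ∈ H0, m v - Y * v ∈ H0
  sub_mem_of_mem_H1 : ∀ v ∈ H1, m (Y * v) - Y * (Y * v) - Y * m v ∈ H0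

/-- The filtration of `H¹` by the submodules `H⁰ + y H⁰ + ⋯ + yⁿ H⁰`. -/
noncomputable def yFiltration : ℕ → Submodule ℚ H
  | 0 => H0
  | n + 1 => H0 ⊔ (yFiltration n).map (LinearMap.mulLeft ℚ Y)

lemma H0_le_yFiltration (n : ℕ) : H0 ≤ yFiltration n := by
  cases n with
  | zero => exact le_rfl
  | succ n => exact le_sup_left

lemma Y_mul_mem_yFiltration {n : ℕ} {v : H} (hv : v ∈ yFiltration n) :
    Y * v ∈ yFiltration (n + 1) :=
  Submodule.mem_sup_right ⟨v, hv, rfl⟩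

lemma yFiltration_le_H1 (n : ℕ) : yFiltration n ≤ H1 := by
  induction n with
  | zero => exact H0_le_H1
  | succ n ih =>
    refine sup_le H0_le_H1 ?_
    rintro _ ⟨v, hv, rfl⟩
    exact Hy_le_H1 (mul_mem_Hy_of_mem_H1 Y_mem_Hy (ih hv))

lemma word_mem_yFiltration {l : List Letter} (hl : IsH1Word l) :
    ∃ n, word (ofList l) ∈ yFiltration n := by
  induction l with
  | nil => exact ⟨0, one_mem_H0⟩
  | cons u l ih =>
    have hul : [Letter.y] <:+ u :: l := hl.resolve_left (List.cons_ne_nil u l)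
    cases u with
    | x =>
      have hl' : [Letter.y] <:+ l := by simpa [List.suffix_cons_iff] using hul
      exact ⟨0, X_mul_word l ▸ X_mul_mem_H0 (word_mem_Hy hl')⟩
    | y =>
      obtain ⟨n, hn⟩ := ih (isH1Word_of_cons hul)
      exact ⟨n + 1, Y_mul_word l ▸ Y_mul_mem_yFiltration hn⟩

namespace InsertsY

variable {m : H →ₗ[ℚ] H} {V : Submodule ℚ H}

lemma sub_smul_mem_yFiltration (hm : InsertsY m) (n : ℕ) :
    ∀ v ∈ yFiltration n, m v - (n + 1 : ℚ) • (Y * v) ∈ yFiltration n := by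
  induction n with
  | zero => simpa [yFiltration] using hm.sub_mem_of_mem_H0
  | succ n ih =>
    intro _ hav
    obtain ⟨a, ha, _, ⟨v, hv, rfl⟩, rfl⟩ := Submodule.mem_sup.1 hav
    have head := H0_le_yFiltration (n + 1) (hm.sub_mem_of_mem_H0 a ha)
    have tail := H0_le_yFiltration (n + 1) (hm.sub_mem_of_mem_H1 v (yFiltration_le_H1 n hv))
    have lower := Y_mul_mem_yFiltration (ih v hv)
    have shift := Submodule.smul_mem _ (n + 1 : ℚ)
      (Y_mul_mem_yFiltration (H0_le_yFiltration n ha))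
    convert sub_mem (add_mem (add_mem head tail) lower) shift using 1
    simp only [LinearMap.mulLeft_apply, map_add, mul_sub, mul_smul_comm, mul_add]
    push_cast
    module

lemma yFiltration_le (hm : InsertsY m) (H0_le : H0 ≤ V) (map_mem : ∀ v ∈ V, v ∈ H1 → m v ∈ V)
    (n : ℕ) : yFiltration n ≤ V := by
  induction n with
  | zero => exact H0_le
  | succ n ih =>
    refine sup_le H0_le ?_
    rintro _ ⟨v, hv, rfl⟩
    have smul_mem := sub_mem (map_mem v (ih hv) (yFiltration_le_H1 n hv))
      (ih (hm.sub_smul_mem_yFiltration n v hv))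
    rw [sub_sub_cancel] at smul_mem
    exact (Submodule.smul_mem_iff _ (by positivity)).1 smul_mem

theorem H1_le (hm : InsertsY m) (H0_le : H0 ≤ V) (map_mem : ∀ v ∈ V, v ∈ H1 → m v ∈ V) :
    H1 ≤ V := by
  refine H.H1_le fun l hl => ?_
  obtain ⟨n, hn⟩ := word_mem_yFiltration hl
  exact hm.yFiltration_le H0_le map_mem n hn

lemma of_words (map_one : m 1 = Y)
    (map_x : ∀ l, [Letter.y] <:+ l →
      m (word (ofList (Letter.x :: l))) - Y * word (ofList (Letter.x :: l)) ∈ H0)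
    (map_y : ∀ l, IsH1Word l →
      m (Y * word (ofList l)) - Y * (Y * word (ofList l)) - Y * m (word (ofList l)) ∈ H0) :
    InsertsY m where
  sub_mem_of_mem_H0 :=
    H0_le (V := H0.comap (m - LinearMap.mulLeft ℚ Y)) (by simp [map_one]) map_x
  sub_mem_of_mem_H1 :=
    H.H1_le (V := H0.comap (m ∘ₗ LinearMap.mulLeft ℚ Y -
      LinearMap.mulLeft ℚ Y ∘ₗ LinearMap.mulLeft ℚ Y - LinearMap.mulLeft ℚ Y ∘ₗ m)) map_y

end InsertsY

end Generation

end H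

open scoped Polynomial

/-! ### Polynomial expansions to all orders -/

section PolyExpansion

open Filter Asymptotics Topology

namespace H

variable {ι : Type*} {l : Filter ι} {L φ ψ : ι → ℝ} {P Q : ℝ[X]}

/-- The functions that, along `l`, tend to zero faster than every power of `L`. -/
def negligible (l : Filter ι) (L : ι → ℝ) : Submodule ℝ (ι → ℝ) where
  carrier := {φ | SuperpolynomialDecay l L φ}
  add_mem' := SuperpolynomialDecay.add
  zero_mem' := superpolynomialDecay_zero l L
  smul_mem' c _ hφ := hφ.const_mul c

/-- `φ` agrees with the polynomial `P` in `L` up to a negligible function. -/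
def HasPolyExpansion (l : Filter ι) (L φ : ι → ℝ) (P : ℝ[X]) : Prop :=
  φ - Polynomial.aeval L P ∈ negligible l L

lemma mul_aeval_mem_negligible (hφ : φ ∈ negligible l L) (P : ℝ[X]) :
    φ * Polynomial.aeval L P ∈ negligible l L := by
  have hφP : SuperpolynomialDecay l L fun i => φ i * P.eval (L i) :=
    SuperpolynomialDecay.mul_polynomial hφ P
  exact hφP.congr fun i => by simp [Polynomial.aeval_fn_apply]

lemma hasPolyExpansion_self : HasPolyExpansion l L L Polynomial.X := by
  simp [HasPolyExpansion]

lemma HasPolyExpansion.mul (hφ : HasPolyExpansion l L φ P) (hψ : HasPolyExpansion l L ψ Q) :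
    HasPolyExpansion l L (φ * ψ) (P * Q) := by
  unfold HasPolyExpansion at *
  convert add_mem (add_mem (SuperpolynomialDecay.mul hφ hψ) (mul_aeval_mem_negligible hφ Q))
    (mul_aeval_mem_negligible hψ P) using 1
  rw [map_mul]
  ring

lemma eq_zero_of_tendsto_aeval [NeBot l] (hL : Tendsto L l atTop)
    (hP : Tendsto (Polynomial.aeval L P) l (𝓝 0)) : P = 0 := by
  replace hP : Tendsto (fun i => P.eval (L i)) l (𝓝 0) :=
    hP.congr fun i => by simp [Polynomial.aeval_fn_apply]
  have degree_le : P.degree ≤ 0 := by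
    by_contra! hdeg
    exact not_tendsto_nhds_of_tendsto_atTop ((P.abs_tendsto_atTop hdeg).comp hL) _ hP.abs
  rw [Polynomial.eq_C_of_degree_le_zero degree_le] at hP ⊢
  simp only [Polynomial.eval_C] at hP
  rw [tendsto_nhds_unique tendsto_const_nhds hP, map_zero]

lemma injective_mkQ_comp_aeval [NeBot l] (hL : Tendsto L l atTop) :
    Function.Injective ((negligible l L).mkQ ∘ₗ (Polynomial.aeval L).toLinearMap) := by
  rw [← LinearMap.ker_eq_bot, LinearMap.ker_eq_bot']
  intro P hP
  have decay : SuperpolynomialDecay l L (Polynomial.aeval L P) :=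
    (Submodule.Quotient.mk_eq_zero _).1 hP
  exact eq_zero_of_tendsto_aeval hL ((decay 0).congr fun i => by simp)

/-- Reading off the expansion is a left inverse of `P ↦ P(L)` modulo negligible functions. -/
lemma exists_linearMap_eq_expansion [NeBot l] (hL : Tendsto L l atTop) :
    ∃ r : (ι → ℝ) →ₗ[ℝ] ℝ[X], ∀ φ P, HasPolyExpansion l L φ P → r φ = P := by
  obtain ⟨r, hr⟩ := LinearMap.exists_leftInverse_of_injective _
    (LinearMap.ker_eq_bot.2 (injective_mkQ_comp_aeval hL))
  refine ⟨r ∘ₗ (negligible l L).mkQ, fun φ P hP => ?_⟩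
  have mkQ_eq : (negligible l L).mkQ φ = (negligible l L).mkQ (Polynomial.aeval L P) :=
    (Submodule.Quotient.eq _).2 hP
  rw [LinearMap.comp_apply, mkQ_eq]
  exact LinearMap.congr_fun hr P

end H

end PolyExpansion

/-! ### Regularized homomorphisms from asymptotic expansions -/

section Regularization

open FreeMonoid (ofList)

open Filter

namespace H

variable {ι : Type*} {l : Filter ι} [NeBot l]
  {mul : H →ₗ[ℚ] H →ₗ[ℚ] H} {Z₀ : H → ℝ}

lemma eqOn_H1_of_isRegHom (hY : InsertsY (mul Y))
    {f g : H →ₗ[ℚ] ℝ[X]} (hf : IsRegHom (fun a b => mul a b) Z₀ f)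
    (hg : IsRegHom (fun a b => mul a b) Z₀ g) : ∀ a ∈ H1, g a = f a := by
  refine hY.H1_le (V := LinearMap.eqLocus g f) (fun a ha => ?_) (fun a ha ha1 => ?_)
  · rw [LinearMap.mem_eqLocus, hg.2.1 a ha, hf.2.1 a ha]
  · rw [LinearMap.mem_eqLocus] at ha ⊢
    rw [hg.1 Y Y_mem_H1 a ha1, hf.1 Y Y_mem_H1 a ha1, hg.2.2, hf.2.2, ha]

lemma map_mul_of_map_mul_word {A : Type*} [Ring A] [Algebra ℚ A] {ev : H →ₗ[ℚ] A}
    (h : ∀ l l', IsH1Word l → IsH1Word l' → ev (mul (word (ofList l)) (word (ofList l'))) =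
      ev (word (ofList l)) * ev (word (ofList l'))) :
    ∀ a ∈ H1, ∀ b ∈ H1, ev (mul a b) = ev a * ev b := by
  intro a ha b hb
  refine H1_le (V := LinearMap.eqLocus (ev ∘ₗ mul.flip b) (LinearMap.mulRight ℚ (ev b) ∘ₗ ev))
    (fun l hl => ?_) ha
  exact H1_le (V := LinearMap.eqLocus (ev ∘ₗ mul (word (ofList l)))
    (LinearMap.mulLeft ℚ (ev (word (ofList l))) ∘ₗ ev)) (fun l' hl' => h l l' hl hl') hb

theorem exists_isRegHom {ev : H →ₗ[ℚ] (ι → ℝ)} (hY : InsertsY (mul Y))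
    (tendsto_Y : Tendsto (ev Y) l atTop)
    (ev_mul : ∀ a ∈ H1, ∀ b ∈ H1, ev (mul a b) = ev a * ev b)
    (ev_H0 : ∀ a ∈ H0, HasPolyExpansion l (ev Y) (ev a) (Polynomial.C (Z₀ a))) :
    ∃ f, IsRegHom (fun a b => mul a b) Z₀ f := by
  obtain ⟨r, hr⟩ := exists_linearMap_eq_expansion tendsto_Y
  have expansion_Y : HasPolyExpansion l (ev Y) (ev Y) Polynomial.X := hasPolyExpansion_self
  have expansion_H1 : ∀ a ∈ H1, HasPolyExpansion l (ev Y) (ev a) (r (ev a)) := by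
    let V : Submodule ℚ H := ((negligible l (ev Y)).restrictScalars ℚ).comap
      (ev - ((Polynomial.aeval (ev Y)).toLinearMap ∘ₗ r).restrictScalars ℚ ∘ₗ ev)
    refine hY.H1_le (V := V) (fun a ha => ?_) (fun a ha ha1 => ?_)
    · change HasPolyExpansion l (ev Y) (ev a) (r (ev a))
      rw [hr _ _ (ev_H0 a ha)]
      exact ev_H0 a ha
    · change HasPolyExpansion l (ev Y) (ev a) (r (ev a)) at ha
      change HasPolyExpansion l (ev Y) (ev (mul Y a)) (r (ev (mul Y a)))
      rw [ev_mul Y Y_mem_H1 a ha1, hr _ _ (expansion_Y.mul ha)]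
      exact expansion_Y.mul ha
  refine ⟨r.restrictScalars ℚ ∘ₗ ev, fun a ha b hb => ?_, fun a ha => hr _ _ (ev_H0 a ha),
    hr _ _ expansion_Y⟩
  change r (ev (mul a b)) = r (ev a) * r (ev b)
  rw [ev_mul a ha b hb]
  exact hr _ _ ((expansion_H1 a ha).mul (expansion_H1 b hb))

end H

end Regularization

/-! ### The two products -/

section Products

namespace H

open FreeMonoid (of ofList)

/-- The bilinear product on `H` with prescribed values on pairs of words. -/
noncomputable def bilinExtend (μ : FreeMonoid Letter → FreeMonoid Letter → H) :
    H →ₗ[ℚ] H →ₗ[ℚ] H :=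
  wordBasis.constr ℚ fun v => wordBasis.constr ℚ (μ v)

lemma bilinExtend_word (μ : FreeMonoid Letter → FreeMonoid Letter → H)
    (v w : FreeMonoid Letter) : bilinExtend μ (word v) (word w) = μ v w := by
  rw [bilinExtend, constr_word, constr_word]

lemma bilinExtend_apply (μ : FreeMonoid Letter → FreeMonoid Letter → H) (a b : H) :
    bilinExtend μ a b =
      a.coeff.sum fun v c => b.coeff.sum fun w d => (c * d) • μ v w := by
  rw [bilinExtend, constr_apply_eq_sum, Finsupp.sum, LinearMap.sum_apply]
  refine Finset.sum_congr rfl fun v _ => ?_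
  rw [LinearMap.smul_apply, constr_apply_eq_sum, Finsupp.smul_sum]
  simp only [mul_smul]

/-- The product `*̄` as a bilinear map. -/
noncomputable def nharmLin : H →ₗ[ℚ] H →ₗ[ℚ] H :=
  bilinExtend fun v w => nharmW (toZ v) (toZ w)

/-- The product `ш̄` as a bilinear map. -/
noncomputable def nshLin : H →ₗ[ℚ] H →ₗ[ℚ] H :=
  bilinExtend fun v w => nshW v.toList w.toList

lemma nharm_eq_nharmLin : nharm = fun a b => nharmLin a b :=
  funext₂ fun a b => (bilinExtend_apply _ a b).symm

lemma nsh_eq_nshLin : nsh = fun a b => nshLin a b :=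
  funext₂ fun a b => (bilinExtend_apply _ a b).symm

lemma nharmLin_word (v w : FreeMonoid Letter) :
    nharmLin (word v) (word w) = nharmW (toZ v) (toZ w) :=
  bilinExtend_word _ v w

lemma nshLin_word (l l' : List Letter) :
    nshLin (word (ofList l)) (word (ofList l')) = nshW l l' :=
  bilinExtend_word _ _ _

section ZDecomposition

lemma word_zListW_cons (k : ℕ) (ks : List ℕ) :
    word (zListW (k :: ks)) = z k * word (zListW ks) :=
  (word_mul _ _).symm

lemma toZAux_replicate_append (j n : ℕ) (l : List Letter) :
    toZAux (List.replicate j Letter.x ++ Letter.y :: l) n = (n + j + 1) :: toZAux l 0 := by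
  induction j generalizing n with
  | zero => rfl
  | succ j ih =>
    rw [List.replicate_succ, List.cons_append, toZAux, ih, Nat.add_right_comm n 1 j, add_assoc n]

lemma toZ_zW_mul {k : ℕ} (hk : 0 < k) (w : FreeMonoid Letter) :
    toZ (zW k * w) = k :: toZ w := by
  have toZ_eq : toZ (zW k * w) = (0 + (k - 1) + 1) :: toZ w := by
    rw [toZ, toZ, ← toZAux_replicate_append]
    simp [zW]
  rw [toZ_eq, zero_add, Nat.sub_add_cancel hk]

lemma toZ_zListW {ks : List ℕ} (hks : ∀ k ∈ ks, 0 < k) : toZ (zListW ks) = ks := by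
  induction ks with
  | nil => rfl
  | cons k ks ih =>
    obtain ⟨k_pos, hks⟩ := List.forall_mem_cons.1 hks
    exact (toZ_zW_mul k_pos _).trans (congrArg (k :: ·) (ih hks))

lemma isH1Word_zListW (ks : List ℕ) : IsH1Word (zListW ks).toList := by
  induction ks with
  | nil => exact .inl rfl
  | cons k ks ih =>
    right
    simpa [zListW] using ih.y_suffix_append (List.replicate (k - 1) Letter.x)

lemma exists_eq_zListW_cons {l : List Letter} (hl : [Letter.y] <:+ l) :
    ∃ k ks, (∀ j ∈ ks, 0 < j) ∧ ofList l = zListW ((k + 1) :: ks) := by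
  induction l with
  | nil => simp at hl
  | cons u l ih =>
    cases u with
    | x =>
      obtain ⟨k, ks, hks, hl⟩ := ih (by simpa [List.suffix_cons_iff] using hl)
      exact ⟨k + 1, ks, hks, congrArg (of Letter.x * ·) hl⟩
    | y =>
      obtain rfl | hl := isH1Word_of_cons hl
      · exact ⟨0, [], by simp, rfl⟩
      · obtain ⟨k, ks, hks, hl⟩ := ih hl
        exact ⟨0, (k + 1) :: ks, by simpa using hks, congrArg (of Letter.y * ·) hl⟩

lemma IsH1Word.exists_eq_zListW {l : List Letter} (hl : IsH1Word l) :
    ∃ ks, (∀ k ∈ ks, 0 < k) ∧ ofList l = zListW ks := by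
  obtain rfl | hl := hl
  · exact ⟨[], by simp, rfl⟩
  · obtain ⟨k, ks, hks, hl⟩ := exists_eq_zListW_cons hl
    exact ⟨(k + 1) :: ks, by simpa using hks, hl⟩

lemma exists_x_cons_eq_zListW {l : List Letter} (hl : [Letter.y] <:+ l) :
    ∃ k ks, (∀ j ∈ ks, 0 < j) ∧ ofList (Letter.x :: l) = zListW ((k + 2) :: ks) := by
  obtain ⟨k, ks, hks, hl⟩ := exists_eq_zListW_cons hl
  exact ⟨k, ks, hks, congrArg (of Letter.x * ·) hl⟩

lemma z_mem_Hy (k : ℕ) : z k ∈ Hy := word_mem_Hy (List.suffix_append _ _)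

lemma z_mul_mem_H1 (k : ℕ) {a : H} (ha : a ∈ H1) : z k * a ∈ H1 :=
  Hy_le_H1 (mul_mem_Hy_of_mem_H1 (z_mem_Hy k) ha)

lemma z_mul_mem_H0 (k : ℕ) {a : H} (ha : a ∈ H1) : z (k + 2) * a ∈ H0 := by
  have z_eq : z (k + 2) = X * z (k + 1) := (X_mul_word _).symm
  rw [z_eq, mul_assoc]
  exact X_mul_mem_H0 (mul_mem_Hy_of_mem_H1 (z_mem_Hy _) ha)

end ZDecomposition

section Harmonic

lemma nharmW_nil_right (ks : List ℕ) : nharmW ks [] = word (zListW ks) := by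
  cases ks <;> rw [nharmW]

lemma nharmW_mem_H1 (ks ls : List ℕ) : nharmW ks ls ∈ H1 := by
  induction ks, ls using nharmW.induct with
  | case1 ls => rw [nharmW]; exact word_mem_H1 (isH1Word_zListW ls)
  | case2 k ks => rw [nharmW]; exact word_mem_H1 (isH1Word_zListW (k :: ks))
  | case3 k ks l ls left right both =>
    rw [nharmW]
    exact sub_mem (add_mem (z_mul_mem_H1 k left) (z_mul_mem_H1 l right))
      (z_mul_mem_H1 (k + l) both)

lemma nharmLin_Y_word {ks : List ℕ} (hks : ∀ k ∈ ks, 0 < k) :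
    nharmLin Y (word (zListW ks)) = nharmW [1] ks := by
  rw [Y, nharmLin_word, toZ_zListW hks]
  rfl

lemma nharmW_one_cons (k : ℕ) (ks : List ℕ) :
    nharmW [1] (k :: ks) = Y * word (zListW (k :: ks)) + z k * nharmW [1] ks -
      z (k + 1) * word (zListW ks) := by
  rw [nharmW, nharmW, nharmW, add_comm 1 k]
  rfl

lemma insertsY_nharmLin : InsertsY (nharmLin Y) := by
  refine InsertsY.of_words ?_ (fun l hl => ?_) (fun l hl => ?_)
  · exact (nharmLin_Y_word (ks := []) (by simp)).trans (nharmW_nil_right [1])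
  · obtain ⟨k, ks, hks, hl⟩ := exists_x_cons_eq_zListW hl
    rw [hl, nharmLin_Y_word (by simpa using hks), nharmW_one_cons, add_sub_assoc,
      add_sub_cancel_left]
    exact sub_mem (z_mul_mem_H0 k (nharmW_mem_H1 [1] ks))
      (z_mul_mem_H0 (k + 1) (word_mem_H1 (isH1Word_zListW ks)))
  · obtain ⟨ks, hks, hl⟩ := hl.exists_eq_zListW
    have Y_mul : Y * word (zListW ks) = word (zListW (1 :: ks)) := (word_zListW_cons 1 ks).symm
    have z_one : z 1 = Y := rfl
    rw [hl, Y_mul, nharmLin_Y_word (by simpa using hks), nharmLin_Y_word hks, nharmW_one_cons,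
      z_one, sub_sub, sub_sub_cancel_left]
    exact neg_mem (z_mul_mem_H0 0 (word_mem_H1 (isH1Word_zListW ks)))

end Harmonic

section Shuffle

lemma nshW_nil_left (l : List Letter) : nshW [] l = word (ofList l) := by
  rw [nshW]

lemma nshW_nil_right (l : List Letter) : nshW l [] = word (ofList l) := by
  cases l <;> rw [nshW]

lemma nshW_mem_Hy {l l' : List Letter} (hl : IsH1Word l) (hl' : IsH1Word l')
    (h : l ++ l' ≠ []) : nshW l l' ∈ Hy := by
  induction l, l' using nshW.induct with
  | case1 l' => exact nshW_nil_left l' ▸ word_mem_Hy (hl'.resolve_left h)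
  | case2 u l => exact nshW_nil_right (u :: l) ▸ word_mem_Hy (hl.resolve_left (by simp))
  | case3 u l u' l' left right =>
    have y_suffix : [Letter.y] <:+ u :: l := hl.resolve_left (List.cons_ne_nil u l)
    have y_suffix' : [Letter.y] <:+ u' :: l' := hl'.resolve_left (List.cons_ne_nil u' l')
    have left_mem : nshW l (u' :: l') ∈ Hy := left (isH1Word_of_cons y_suffix) hl' (by simp)
    have right_mem : nshW (u :: l) l' ∈ Hy := right hl (isH1Word_of_cons y_suffix') (by simp)
    have cons_mem (v : Letter) {w : List Letter} (hw : [Letter.y] <:+ w) :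
        word (ofList (v :: w)) ∈ Hy :=
      word_mem_Hy (hw.trans (List.suffix_cons _ _))
    rw [nshW]
    exact sub_mem (sub_mem (add_mem (mul_mem_Hy _ left_mem) (mul_mem_Hy _ right_mem))
      (Submodule.smul_mem _ _ (cons_mem _ y_suffix')))
      (Submodule.smul_mem _ _ (cons_mem _ y_suffix))

lemma nshLin_Y_word (l : List Letter) :
    nshLin Y (word (ofList l)) = nshW [Letter.y] l :=
  nshLin_word _ _

lemma nshW_y_cons (u : Letter) (l : List Letter) :
    nshW [Letter.y] (u :: l) = Y * word (ofList (u :: l)) +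
      word (of u) * nshW [Letter.y] l - X * word (ofList (u :: l)) -
        δ l • word (ofList [τ u, Letter.y]) := by
  rw [nshW, nshW_nil_left, X_mul_word]
  simp only [δ, τ, one_smul]
  rfl

lemma insertsY_nshLin : InsertsY (nshLin Y) := by
  refine InsertsY.of_words ?_ (fun l hl => ?_) (fun l hl => ?_)
  · exact (nshLin_Y_word []).trans (nshW_nil_right _)
  · rw [nshLin_Y_word, nshW_y_cons, δ_eq_zero hl, zero_smul, sub_zero, add_sub_assoc,
      add_sub_cancel_left]
    exact sub_mem (X_mul_mem_H0 (nshW_mem_Hy (.inr List.suffix_rfl) (.inr hl) (by simp)))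
      (X_mul_mem_H0 (word_mem_Hy (hl.trans (List.suffix_cons _ _))))
  · rw [Y_mul_word, nshLin_Y_word, nshLin_Y_word, nshW_y_cons]
    have head := X_mul_mem_H0 (word_mem_Hy (hl.y_suffix_append []))
    have last := Submodule.smul_mem _ (δ l) (X_mul_mem_H0 Y_mem_Hy)
    convert neg_mem (add_mem head last) using 1
    have word_xy : word (ofList [τ Letter.y, Letter.y]) = X * Y := (X_mul_word _).symm
    rw [word_xy, ← Y]
    simp only [List.nil_append]
    abel

end Shuffle

end H

end Products

/-! ### Truncated non-strict multiple zeta values -/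

section TruncatedSums

namespace H

open Filter Asymptotics Finset

/-- The operator `φ ↦ ∑_{0 < m ≤ N} φ(m) / m^k`. -/
noncomputable def truncSum (k : ℕ) : (ℕ → ℝ) →ₗ[ℝ] (ℕ → ℝ) :=
  LinearMap.pi fun N => ∑ m ∈ range N, (((m + 1 : ℕ) : ℝ) ^ k)⁻¹ • LinearMap.proj (m + 1)

lemma truncSum_apply (k : ℕ) (φ : ℕ → ℝ) (N : ℕ) :
    truncSum k φ N = ∑ m ∈ range N, (((m + 1 : ℕ) : ℝ) ^ k)⁻¹ * φ (m + 1) := by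
  simp [truncSum]

lemma truncSum_succ (k : ℕ) (φ : ℕ → ℝ) (N : ℕ) :
    truncSum k φ (N + 1) = truncSum k φ N + (((N + 1 : ℕ) : ℝ) ^ k)⁻¹ * φ (N + 1) := by
  rw [truncSum_apply, truncSum_apply, sum_range_succ]

/-- The Rota–Baxter identity for summation, which mirrors the recursion of `*̄`. -/
lemma truncSum_mul_truncSum (k l : ℕ) (φ ψ : ℕ → ℝ) :
    truncSum k φ * truncSum l ψ = truncSum k (φ * truncSum l ψ) + truncSum l (truncSum k φ * ψ) -
      truncSum (k + l) (φ * ψ) := by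
  ext N
  simp only [Pi.mul_apply, Pi.add_apply, Pi.sub_apply]
  induction N with
  | zero => simp [truncSum_apply]
  | succ N ih =>
    simp only [truncSum_succ, Pi.mul_apply, pow_add, mul_inv]
    linear_combination ih

lemma truncSum_le_mul {φ : ℕ → ℝ} (hφ : Monotone φ) (k N : ℕ) :
    truncSum k φ N ≤ truncSum k 1 N * φ N := by
  simp only [truncSum_apply, sum_mul, Pi.one_apply, mul_one]
  gcongr with m hm
  exact hφ (mem_range.1 hm)

lemma truncSum_one_le (k N : ℕ) : truncSum k 1 N ≤ N := by
  have term_le (m : ℕ) : (((m + 1 : ℕ) : ℝ) ^ k)⁻¹ ≤ 1 :=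
    inv_le_one_of_one_le₀ (one_le_pow₀ (by simp))
  simpa [truncSum_apply] using sum_le_card_nsmul (range N) _ 1 fun m _ => term_le m

lemma truncSum_one_one (N : ℕ) : truncSum 1 1 N = harmonic N := by
  simp [truncSum_apply, harmonic]

lemma truncSum_one_le_harmonic {k : ℕ} (hk : 0 < k) (N : ℕ) :
    truncSum k 1 N ≤ harmonic N := by
  rw [← truncSum_one_one, truncSum_apply, truncSum_apply]
  gcongr with m
  · simp
  · simp
  · exact hk

/-- The part of the series `ζ̄(k₁,…,kₙ)` with `m₁ = m`; the empty tuple is put at `m = 0`. -/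
noncomputable def nmzetaTerm : List ℕ → ℕ → ℝ
  | [], 0 => 1
  | [], _ + 1 => 0
  | _ :: _, 0 => 0
  | k :: ks, m + 1 => (((m + 1 : ℕ) : ℝ) ^ k)⁻¹ * ∑ j ∈ range (m + 2), nmzetaTerm ks j

/-- The part of the series `ζ̄(k₁,…,kₙ)` with `m₁ ≤ N`. -/
noncomputable def nmzetaTrunc (ks : List ℕ) (N : ℕ) : ℝ :=
  ∑ m ∈ range (N + 1), nmzetaTerm ks m

lemma nmzetaTerm_cons_zero (k : ℕ) (ks : List ℕ) : nmzetaTerm (k :: ks) 0 = 0 := by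
  rw [nmzetaTerm]

lemma nmzetaTerm_cons_succ (k : ℕ) (ks : List ℕ) (m : ℕ) :
    nmzetaTerm (k :: ks) (m + 1) = (((m + 1 : ℕ) : ℝ) ^ k)⁻¹ * nmzetaTrunc ks (m + 1) := by
  rw [nmzetaTerm, nmzetaTrunc]

lemma nmzetaTrunc_nil : nmzetaTrunc [] = 1 := by
  ext N
  simp [nmzetaTrunc, sum_range_succ', nmzetaTerm]

lemma nmzetaTrunc_cons (k : ℕ) (ks : List ℕ) :
    nmzetaTrunc (k :: ks) = truncSum k (nmzetaTrunc ks) := by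
  ext N
  rw [nmzetaTrunc, sum_range_succ', nmzetaTerm_cons_zero, add_zero, truncSum_apply]
  simp only [nmzetaTerm_cons_succ]

lemma nmzetaTerm_nonneg (ks : List ℕ) (m : ℕ) : 0 ≤ nmzetaTerm ks m := by
  induction ks generalizing m with
  | nil => cases m <;> simp [nmzetaTerm]
  | cons k ks ih =>
    cases m with
    | zero => exact (nmzetaTerm_cons_zero k ks).ge
    | succ m =>
      rw [nmzetaTerm]
      exact mul_nonneg (by positivity) (sum_nonneg fun j _ => ih j)

lemma nmzetaTrunc_nonneg (ks : List ℕ) (N : ℕ) : 0 ≤ nmzetaTrunc ks N :=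
  sum_nonneg fun m _ => nmzetaTerm_nonneg ks m

lemma nmzetaTrunc_mono (ks : List ℕ) : Monotone (nmzetaTrunc ks) := fun _ _ h =>
  sum_le_sum_of_subset_of_nonneg (range_mono (by gcongr)) fun m _ _ => nmzetaTerm_nonneg ks m

lemma nmzetaTerm_le_nmzetaTrunc (ks : List ℕ) (m : ℕ) : nmzetaTerm ks m ≤ nmzetaTrunc ks m :=
  single_le_sum (fun j _ => nmzetaTerm_nonneg ks j) (self_mem_range_succ m)

lemma nmzetaTrunc_le_pow (ks : List ℕ) (N : ℕ) : nmzetaTrunc ks N ≤ (N : ℝ) ^ ks.length := by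
  induction ks with
  | nil => simp [nmzetaTrunc_nil]
  | cons k ks ih =>
    rw [nmzetaTrunc_cons, List.length_cons, pow_succ']
    refine (truncSum_le_mul (nmzetaTrunc_mono ks) k N).trans ?_
    gcongr
    · exact nmzetaTrunc_nonneg ks N
    · exact truncSum_one_le k N

lemma harmonic_isBigO_rpow {r : ℝ} (hr : 0 < r) :
    (fun N : ℕ => (harmonic N : ℝ)) =O[atTop] fun N : ℕ => (N : ℝ) ^ r := by
  have le_one_add_log : (fun N : ℕ => (harmonic N : ℝ)) =O[atTop]
      fun N : ℕ => 1 + Real.log N := by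
    refine IsBigO.of_norm_le fun N => ?_
    rw [Real.norm_of_nonneg (by rw [harmonic]; push_cast; positivity)]
    exact harmonic_le_one_add_log N
  have one_add_log : (fun x : ℝ => 1 + Real.log x) =O[atTop] fun x : ℝ => x ^ r :=
    (Real.isLittleO_const_log_atTop.isBigO.add (isBigO_refl _ _)).trans
      (isLittleO_log_rpow_atTop hr).isBigO
  exact le_one_add_log.trans (one_add_log.comp_tendsto tendsto_natCast_atTop_atTop)

lemma nmzetaTrunc_isBigO_rpow {ks : List ℕ} (hks : ∀ k ∈ ks, 0 < k) {r : ℝ} (hr : 0 < r) :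
    nmzetaTrunc ks =O[atTop] fun N : ℕ => (N : ℝ) ^ r := by
  induction ks generalizing r with
  | nil =>
    rw [nmzetaTrunc_nil]
    exact (isLittleO_const_left.2 (.inr (tendsto_norm_atTop_atTop.comp
      ((tendsto_rpow_atTop hr).comp tendsto_natCast_atTop_atTop)))).isBigO
  | cons k ks ih =>
    obtain ⟨k_pos, hks⟩ := List.forall_mem_cons.1 hks
    have le_mul : nmzetaTrunc (k :: ks) =O[atTop] fun N => harmonic N * nmzetaTrunc ks N := by
      refine IsBigO.of_norm_le fun N => ?_
      rw [Real.norm_of_nonneg (nmzetaTrunc_nonneg _ N), nmzetaTrunc_cons]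
      refine (truncSum_le_mul (nmzetaTrunc_mono ks) k N).trans ?_
      exact mul_le_mul_of_nonneg_right (truncSum_one_le_harmonic k_pos N)
        (nmzetaTrunc_nonneg ks N)
    refine (le_mul.trans ((harmonic_isBigO_rpow (half_pos hr)).mul (ih hks (half_pos hr)))).congr'
      .rfl ?_
    filter_upwards [eventually_gt_atTop 0] with N hN
    rw [← Real.rpow_add (by positivity), add_halves]

lemma nmzetaTerm_cons_isBigO_rpow (k : ℕ) {ks : List ℕ} (hks : ∀ j ∈ ks, 0 < j) {r : ℝ}
    (hr : 0 < r) : nmzetaTerm (k :: ks) =O[atTop] fun m : ℕ => (m : ℝ) ^ (r - k) := by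
  have inv_pow : (fun m : ℕ => ((m : ℝ) ^ k)⁻¹) =O[atTop] fun m : ℕ => ((m : ℝ) ^ k)⁻¹ :=
    isBigO_refl _ _
  refine (inv_pow.mul (nmzetaTrunc_isBigO_rpow hks hr)).congr' ?_ ?_
  · filter_upwards [eventually_gt_atTop 0] with m hm
    obtain ⟨m, rfl⟩ := Nat.exists_eq_add_one.2 hm
    rw [nmzetaTerm_cons_succ]
  · filter_upwards [eventually_gt_atTop 0] with m hm
    rw [Real.rpow_sub (by positivity), Real.rpow_natCast, inv_mul_eq_div]

lemma summable_nmzetaTerm_mul_rpow (k : ℕ) {ks : List ℕ} (hks : ∀ j ∈ ks, 0 < j) {r : ℝ}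
    (hr : r < 1) : Summable fun m : ℕ => nmzetaTerm ((k + 2) :: ks) m * (m : ℝ) ^ r := by
  set s := (1 - r) / 2 with hs
  have term_isBigO := nmzetaTerm_cons_isBigO_rpow (k + 2) hks (r := s) (by linarith)
  have exponent_lt : s - (k + 2 : ℕ) + r < -1 := by push_cast; linarith [k.cast_nonneg (α := ℝ)]
  refine summable_of_isBigO_nat (Real.summable_nat_rpow.2 exponent_lt) ?_
  refine (term_isBigO.mul (isBigO_refl (fun m : ℕ => (m : ℝ) ^ r) atTop)).congr' .rfl ?_
  filter_upwards [eventually_gt_atTop 0] with m hm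
  rw [← Real.rpow_add (by positivity)]

lemma summable_nmzetaTerm (k : ℕ) {ks : List ℕ} (hks : ∀ j ∈ ks, 0 < j) :
    Summable (nmzetaTerm ((k + 2) :: ks)) := by
  simpa using summable_nmzetaTerm_mul_rpow k hks zero_lt_one

lemma summable_nmzetaTerm_mul_pow (ks : List ℕ) {t : ℝ} (ht : ‖t‖ < 1) :
    Summable fun m => nmzetaTerm ks m * t ^ m := by
  refine (summable_pow_mul_geometric_of_norm_lt_one ks.length ht).norm.of_norm_bounded fun m => ?_
  rw [norm_mul, norm_mul, Real.norm_of_nonneg (nmzetaTerm_nonneg ks m),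
    Real.norm_of_nonneg (by positivity : (0 : ℝ) ≤ (m : ℝ) ^ ks.length)]
  gcongr
  exact (nmzetaTerm_le_nmzetaTrunc ks m).trans (nmzetaTrunc_le_pow ks m)

end H

end TruncatedSums

/-! ### The series of a non-strict multiple zeta value, grouped by its largest index -/

section TupleSums

namespace H

open scoped ENNReal

/-- The weakly decreasing `n`-tuples of positive integers with entries in `s`. -/
def decreasingTuples (n : ℕ) (s : Set ℕ) : Set (Fin n → ℕ) :=
  {f | ((∀ i, 0 < f i) ∧ Antitone f) ∧ ∀ i, f i ∈ s}

/-- The part of the series `ζ̄(k₁,…,kₙ)` with all indices in `s`, as an extended real so that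
it makes sense also if the series diverges. -/
noncomputable def tupleSum (ks : List ℕ) (s : Set ℕ) : ℝ≥0∞ :=
  ∑' f, (decreasingTuples ks.length s).indicator
    (fun f => ∏ i, ENNReal.ofReal (((f i : ℝ) ^ ks.get i)⁻¹)) f

lemma antitone_cons_iff {α : Type*} [Preorder α] {n : ℕ} {m : α} {f : Fin n → α} :
    Antitone (Fin.cons m f : Fin (n + 1) → α) ↔ (∀ i, f i ≤ m) ∧ Antitone f := by
  simp [Antitone, Fin.forall_fin_succ]

lemma cons_mem_decreasingTuples_iff {n : ℕ} {s : Set ℕ} (hs : IsLowerSet s) {m : ℕ}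
    {f : Fin n → ℕ} : (Fin.cons m f : Fin (n + 1) → ℕ) ∈ decreasingTuples (n + 1) s ↔
      (0 < m ∧ m ∈ s) ∧ f ∈ decreasingTuples n (Set.Iic m) := by
  simp only [decreasingTuples, Set.mem_ofPred_eq, antitone_cons_iff, Fin.forall_fin_succ,
    Fin.cons_zero, Fin.cons_succ, Set.mem_Iic]
  have mem_of_le (h : m ∈ s) (hf : ∀ i, f i ≤ m) (i : Fin n) : f i ∈ s := hs (hf i) h
  tauto

lemma tsum_fin_cons {α : Type*} {n : ℕ} (F : (Fin (n + 1) → α) → ℝ≥0∞) :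
    ∑' f, F f = ∑' m : α, ∑' f : Fin n → α, F (Fin.cons m f) := by
  rw [← ENNReal.tsum_prod, ← (Fin.consEquiv fun _ : Fin (n + 1) => α).tsum_eq]
  rfl

lemma tupleSum_nil (s : Set ℕ) : tupleSum [] s = 1 := by
  simp [tupleSum, decreasingTuples, Antitone]

lemma tupleSum_cons (k : ℕ) (ks : List ℕ) {s : Set ℕ} (hs : IsLowerSet s) :
    tupleSum (k :: ks) s = ∑' m, {m | 0 < m ∧ m ∈ s}.indicator
      (fun m => ENNReal.ofReal (((m : ℝ) ^ k)⁻¹) * tupleSum ks (Set.Iic m)) m := by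
  classical
  refine (tsum_fin_cons (n := ks.length) _).trans (tsum_congr fun m => ?_)
  simp only [Set.indicator_apply, List.length_cons, cons_mem_decreasingTuples_iff hs,
    Set.mem_ofPred_eq]
  split_ifs with hm
  · simp only [hm, true_and, tupleSum, ← ENNReal.tsum_mul_left, Set.indicator_apply, mul_ite,
      mul_zero]
    refine tsum_congr fun f => if_congr Iff.rfl ?_ rfl
    exact (Fin.prod_univ_succ (n := ks.length) _).trans (by simp)
  · simp [hm]

lemma tupleSum_eq_tsum_nmzetaTerm (ks : List ℕ) {s : Set ℕ} (hs : IsLowerSet s) (zero_mem : 0 ∈ s) :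
    tupleSum ks s = ∑' m, s.indicator (fun m => ENNReal.ofReal (nmzetaTerm ks m)) m := by
  classical
  induction ks generalizing s with
  | nil =>
    rw [tupleSum_nil, tsum_eq_single 0]
    · simp [zero_mem, nmzetaTerm]
    · intro m hm
      obtain ⟨m, rfl⟩ := Nat.exists_eq_succ_of_ne_zero hm
      simp [nmzetaTerm]
  | cons k ks ih =>
    have tupleSum_Iic (m : ℕ) : tupleSum ks (Set.Iic m) = ENNReal.ofReal (nmzetaTrunc ks m) := by
      rw [ih (isLowerSet_Iic m) (Set.mem_Iic.2 m.zero_le), nmzetaTrunc,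
        ENNReal.ofReal_sum_of_nonneg fun j _ => nmzetaTerm_nonneg ks j, ← tsum_subtype,
        Nat.range_succ_eq_Iic, ← Finset.coe_Iic]
      exact Finset.tsum_subtype' (Finset.Iic m) fun j => ENNReal.ofReal (nmzetaTerm ks j)
    rw [tupleSum_cons k ks hs]
    refine tsum_congr fun m => ?_
    cases m with
    | zero => simp [Set.indicator_apply, nmzetaTerm_cons_zero]
    | succ m =>
      rw [Set.indicator_apply, Set.indicator_apply, nmzetaTerm_cons_succ, tupleSum_Iic,
        ENNReal.ofReal_mul (by positivity)]
      simp

lemma nmzeta_eq_toReal_tupleSum (ks : List ℕ) :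
    nmzeta ks = (tupleSum ks Set.univ).toReal := by
  have tupleSum_univ : tupleSum ks Set.univ =
      ∑' f : {f : Fin ks.length → ℕ | (∀ i, 0 < f i) ∧ Antitone f},
        ∏ i, ENNReal.ofReal (((f.1 i : ℝ) ^ ks.get i)⁻¹) := by
    simp only [tupleSum, decreasingTuples, Set.mem_univ, implies_true, and_true]
    rw [← tsum_subtype]
  rw [tupleSum_univ, ENNReal.tsum_toReal_eq fun f => ENNReal.prod_ne_top fun i _ =>
    ENNReal.ofReal_ne_top]
  refine tsum_congr fun f => ?_
  rw [ENNReal.toReal_prod]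
  refine Finset.prod_congr rfl fun i _ => ?_
  exact (ENNReal.toReal_ofReal (by positivity)).symm

lemma nmzeta_eq_tsum_nmzetaTerm (ks : List ℕ) : nmzeta ks = ∑' m, nmzetaTerm ks m := by
  rw [nmzeta_eq_toReal_tupleSum, tupleSum_eq_tsum_nmzetaTerm ks isLowerSet_univ (Set.mem_univ 0)]
  simp only [Set.indicator_univ]
  rw [ENNReal.tsum_toReal_eq fun _ => ENNReal.ofReal_ne_top]
  exact tsum_congr fun m => ENNReal.toReal_ofReal (nmzetaTerm_nonneg ks m)

/-- The evaluation map `Z̄` as a linear map. -/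
noncomputable def zbarLin : H →ₗ[ℚ] ℝ := wordBasis.constr ℚ fun w => nmzeta (toZ w)

lemma Zbar_eq_zbarLin : Zbar = zbarLin := by
  ext a
  rw [zbarLin, constr_apply_eq_sum, Zbar]
  simp only [Rat.smul_def]

end H

end TupleSums

/-! ### Summation methods -/

section SummationMethods

namespace H

open FreeMonoid (ofList)

open Filter Asymptotics

variable {ι : Type*} {l : Filter ι} {L : ι → ℝ} {θ : ι → ℕ → ℝ} {C r : ℝ}

/-- The family, indexed by `ι`, of linear extensions of `z_{k₁}⋯z_{kₙ} ↦ ζ̄(k₁,…,kₙ)` in which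
the part of the series with `m₁ = m` is weighted by `θ i m`. -/
noncomputable def weightedEval (θ : ι → ℕ → ℝ) : H →ₗ[ℚ] (ι → ℝ) :=
  wordBasis.constr ℚ fun w i => ∑' m, nmzetaTerm (toZ w) m * θ i m

lemma weightedEval_word (θ : ι → ℕ → ℝ) (w : FreeMonoid Letter) :
    weightedEval θ (word w) = fun i => ∑' m, nmzetaTerm (toZ w) m * θ i m :=
  constr_word _ w

lemma superpolynomialDecay_exp_neg_mul (hr : 0 < r) (hL : Tendsto L l atTop) :
    SuperpolynomialDecay l L fun i => Real.exp (-(r * L i)) := by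
  intro n
  refine ((isLittleO_pow_exp_pos_mul_atTop n hr).tendsto_div_nhds_zero.comp hL).congr fun i => ?_
  simp only [Function.comp_apply, Real.exp_neg, div_eq_mul_inv]

lemma abs_tsum_mul_sub_tsum_le {s ω : ℕ → ℝ} {ε : ℝ} (hε : 0 ≤ ε) (hs : Summable s)
    (hsr : Summable fun m => s m * (m : ℝ) ^ r) (hω : ∀ m : ℕ, |1 - ω m| ≤ (m * ε) ^ r) :
    |∑' m, s m * ω m - ∑' m, s m| ≤ (∑' m, |s m * (m : ℝ) ^ r|) * ε ^ r := by
  have norm_le (m : ℕ) : ‖s m * (1 - ω m)‖ ≤ |s m * (m : ℝ) ^ r| * ε ^ r := by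
    rw [norm_mul, abs_mul, mul_assoc, abs_of_nonneg (by positivity : (0 : ℝ) ≤ (m : ℝ) ^ r),
      ← Real.mul_rpow m.cast_nonneg hε]
    exact mul_le_mul_of_nonneg_left (hω m) (abs_nonneg _)
  have bound_summable : Summable fun m => |s m * (m : ℝ) ^ r| * ε ^ r := hsr.abs.mul_right _
  have diff_summable : Summable fun m => s m * (1 - ω m) := .of_norm_bounded bound_summable norm_le
  have tsum_eq : ∑' m, s m * ω m = ∑' m, s m - ∑' m, s m * (1 - ω m) := by
    rw [← hs.tsum_sub diff_summable]
    exact tsum_congr fun m => by ring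
  rw [tsum_eq, sub_sub_cancel_left, abs_neg, ← tsum_mul_right]
  exact tsum_of_norm_bounded bound_summable.hasSum norm_le

lemma tsum_mul_sub_tsum_mem_negligible {s : ℕ → ℝ} (hC : 0 ≤ C) (hr : 0 < r)
    (hL : Tendsto L l atTop) (hs : Summable s) (hsr : Summable fun m => s m * (m : ℝ) ^ r)
    (hθ : ∀ i m, |1 - θ i m| ≤ (m * (C * Real.exp (-L i))) ^ r) :
    (fun i => ∑' m, s m * θ i m - ∑' m, s m) ∈ negligible l L := by
  refine SuperpolynomialDecay.trans_abs_le
    ((superpolynomialDecay_exp_neg_mul hr hL).const_mul ((∑' m, |s m * (m : ℝ) ^ r|) * C ^ r))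
    fun i => ?_
  refine (abs_tsum_mul_sub_tsum_le (by positivity) hs hsr (hθ i)).trans ?_
  rw [Real.mul_rpow hC (Real.exp_pos _).le, ← Real.exp_mul, neg_mul, mul_comm (L i), ← mul_assoc]
  exact le_abs_self _

lemma summable_nmzetaTerm_nil_mul (φ : ℕ → ℝ) : Summable fun m => nmzetaTerm [] m * φ m :=
  summable_of_ne_finset_zero (s := {0}) fun m hm => by
    obtain ⟨m, rfl⟩ := Nat.exists_eq_succ_of_ne_zero (Finset.notMem_singleton.1 hm)
    rw [nmzetaTerm, zero_mul]

lemma hasPolyExpansion_weightedEval_word {w : FreeMonoid Letter} (hC : 0 ≤ C) (hr : 0 < r)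
    (hL : Tendsto L l atTop) (hθ : ∀ i m, |1 - θ i m| ≤ (m * (C * Real.exp (-L i))) ^ r)
    (hw : Summable (nmzetaTerm (toZ w)))
    (hwr : Summable fun m : ℕ => nmzetaTerm (toZ w) m * (m : ℝ) ^ r) :
    HasPolyExpansion l L (weightedEval θ (word w)) (Polynomial.C (zbarLin (word w))) := by
  rw [HasPolyExpansion, weightedEval_word, zbarLin, constr_word, nmzeta_eq_tsum_nmzetaTerm,
    Polynomial.aeval_C]
  exact tsum_mul_sub_tsum_mem_negligible hC hr hL hw hwr hθ

lemma hasPolyExpansion_weightedEval (hC : 0 ≤ C) (hr₀ : 0 < r) (hr₁ : r < 1)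
    (hL : Tendsto L l atTop) (hθ : ∀ i m, |1 - θ i m| ≤ (m * (C * Real.exp (-L i))) ^ r) :
    ∀ a ∈ H0, HasPolyExpansion l L (weightedEval θ a) (Polynomial.C (Zbar a)) := by
  have mem_iff (a : H) : a ∈ ((negligible l L).restrictScalars ℚ).comap (weightedEval θ -
      (Algebra.linearMap ℝ (ι → ℝ)).restrictScalars ℚ ∘ₗ zbarLin) ↔
      HasPolyExpansion l L (weightedEval θ a) (Polynomial.C (zbarLin a)) := by
    rw [HasPolyExpansion, Polynomial.aeval_C]
    rfl
  simp only [Zbar_eq_zbarLin, ← mem_iff]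
  refine H0_le ((mem_iff _).2 ?_) fun v hv => (mem_iff _).2 ?_
  · refine hasPolyExpansion_weightedEval_word (w := 1) hC hr₀ hL hθ ?_
      (summable_nmzetaTerm_nil_mul _)
    change Summable (nmzetaTerm [])
    simpa using summable_nmzetaTerm_nil_mul 1
  · obtain ⟨k, ks, hks, hw⟩ := exists_x_cons_eq_zListW hv
    have toZ_eq : toZ (ofList (Letter.x :: v)) = (k + 2) :: ks := by
      rw [hw, toZ_zListW]
      simpa using hks
    refine hasPolyExpansion_weightedEval_word hC hr₀ hL hθ ?_ ?_ <;> rw [toZ_eq]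
    · exact summable_nmzetaTerm k hks
    · exact summable_nmzetaTerm_mul_rpow k hks hr₁

end H

end SummationMethods

/-! ### The n-harmonic product: partial sums -/

section Harmonic

namespace H

open FreeMonoid (ofList)

open Filter

/-- The weights of ordinary summation: `1` for `m ≤ N` and `0` for `m > N`. -/
noncomputable def partialSumWeight (N m : ℕ) : ℝ := if m ≤ N then 1 else 0

lemma weightedEval_partialSumWeight_word (w : FreeMonoid Letter) :
    weightedEval partialSumWeight (word w) = nmzetaTrunc (toZ w) := by
  ext N
  simp only [weightedEval_word, nmzetaTrunc]
  rw [tsum_eq_sum (s := Finset.range (N + 1))]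
  · refine Finset.sum_congr rfl fun m hm => ?_
    rw [partialSumWeight, if_pos (Finset.mem_range_succ_iff.1 hm), mul_one]
  · intro m hm
    rw [partialSumWeight, if_neg (mt Finset.mem_range_succ_iff.2 hm), mul_zero]

lemma weightedEval_partialSumWeight_zListW {ks : List ℕ} (hks : ∀ k ∈ ks, 0 < k) :
    weightedEval partialSumWeight (word (zListW ks)) = nmzetaTrunc ks := by
  rw [weightedEval_partialSumWeight_word, toZ_zListW hks]

lemma weightedEval_partialSumWeight_Y :
    weightedEval partialSumWeight Y = fun N => (harmonic N : ℝ) := by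
  ext N
  rw [← truncSum_one_one, ← nmzetaTrunc_nil, ← nmzetaTrunc_cons]
  exact congrFun (weightedEval_partialSumWeight_word _) N

lemma weightedEval_partialSumWeight_z_mul {k : ℕ} (hk : 0 < k) (a : H) :
    weightedEval partialSumWeight (z k * a) =
      truncSum k (weightedEval partialSumWeight a) := by
  have comp_eq : weightedEval partialSumWeight ∘ₗ LinearMap.mulLeft ℚ (z k) =
      (truncSum k).restrictScalars ℚ ∘ₗ weightedEval partialSumWeight := by
    refine wordBasis.ext fun w => ?_
    rw [wordBasis_apply, LinearMap.comp_apply, LinearMap.comp_apply, LinearMap.mulLeft_apply, z,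
      word_mul, weightedEval_partialSumWeight_word, weightedEval_partialSumWeight_word,
      toZ_zW_mul hk, nmzetaTrunc_cons, LinearMap.restrictScalars_apply]
  exact LinearMap.congr_fun comp_eq a

lemma weightedEval_partialSumWeight_nharmW {ks ls : List ℕ} (hks : ∀ k ∈ ks, 0 < k)
    (hls : ∀ l ∈ ls, 0 < l) :
    weightedEval partialSumWeight (nharmW ks ls) = nmzetaTrunc ks * nmzetaTrunc ls := by
  induction ks, ls using nharmW.induct with
  | case1 ls =>
    rw [nharmW, weightedEval_partialSumWeight_zListW hls, nmzetaTrunc_nil, one_mul]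
  | case2 k ks =>
    rw [nharmW, weightedEval_partialSumWeight_zListW hks, nmzetaTrunc_nil, mul_one]
  | case3 k ks l ls ih₁ ih₂ ih₃ =>
    obtain ⟨k_pos, ks_pos⟩ := List.forall_mem_cons.1 hks
    obtain ⟨l_pos, ls_pos⟩ := List.forall_mem_cons.1 hls
    rw [nharmW, map_sub, map_add, weightedEval_partialSumWeight_z_mul k_pos,
      weightedEval_partialSumWeight_z_mul l_pos, weightedEval_partialSumWeight_z_mul (by omega),
      ih₁ ks_pos hls, ih₂ hks ls_pos, ih₃ ks_pos ls_pos, nmzetaTrunc_cons, nmzetaTrunc_cons,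
      truncSum_mul_truncSum]

lemma weightedEval_partialSumWeight_nharmLin : ∀ a ∈ H1, ∀ b ∈ H1,
    weightedEval partialSumWeight (nharmLin a b) =
      weightedEval partialSumWeight a * weightedEval partialSumWeight b := by
  refine map_mul_of_map_mul_word fun v w hv hw => ?_
  obtain ⟨ks, hks, hv⟩ := hv.exists_eq_zListW
  obtain ⟨ls, hls, hw⟩ := hw.exists_eq_zListW
  rw [hv, hw, nharmLin_word, toZ_zListW hks, toZ_zListW hls,
    weightedEval_partialSumWeight_nharmW hks hls,
    weightedEval_partialSumWeight_zListW hks, weightedEval_partialSumWeight_zListW hls]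

lemma tendsto_harmonic_atTop : Tendsto (fun N => (harmonic N : ℝ)) atTop atTop :=
  tendsto_atTop_mono log_add_one_le_harmonic
    (Real.tendsto_log_atTop.comp (tendsto_natCast_atTop_atTop.comp (tendsto_add_atTop_nat 1)))

lemma harmonic_mono : Monotone fun N => (harmonic N : ℝ) := by
  simpa only [nmzetaTrunc_cons, nmzetaTrunc_nil, funext truncSum_one_one] using nmzetaTrunc_mono [1]

lemma abs_one_sub_partialSumWeight_le {r : ℝ} (hr : 0 ≤ r) (N m : ℕ) :
    |1 - partialSumWeight N m| ≤ (m * (Real.exp 1 * Real.exp (-harmonic N))) ^ r := by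
  rw [partialSumWeight]
  split_ifs with hm
  · simp only [sub_self, abs_zero]
    positivity
  · rw [sub_zero, abs_one]
    refine Real.one_le_rpow ?_ hr
    have m_pos : (0 : ℝ) < m := by exact_mod_cast (by omega : 0 < m)
    have harmonic_le : (harmonic N : ℝ) ≤ 1 + Real.log m :=
      (harmonic_mono (by omega : N ≤ m)).trans (harmonic_le_one_add_log m)
    rw [← Real.exp_log m_pos, ← Real.exp_add, ← Real.exp_add]
    exact Real.one_le_exp (by linarith)

theorem exists_isRegHom_nharm : ∃ f, IsRegHom nharm Zbar f := by
  rw [nharm_eq_nharmLin]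
  refine exists_isRegHom (l := atTop) (ev := weightedEval partialSumWeight) insertsY_nharmLin ?_
    weightedEval_partialSumWeight_nharmLin ?_ <;> rw [weightedEval_partialSumWeight_Y]
  · exact tendsto_harmonic_atTop
  · exact hasPolyExpansion_weightedEval (r := 1 / 2) (Real.exp_pos 1).le (by norm_num)
      (by norm_num) tendsto_harmonic_atTop (abs_one_sub_partialSumWeight_le (by norm_num))

end H

end Harmonic

/-! ### The n-shuffle product: generating series -/

section GeneratingSeries

namespace H

open FreeMonoid (of ofList)

open PowerSeries (coeff constantCoeff)

open scoped PowerSeries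

/-- The Euler operator `t d/dt` on power series. -/
noncomputable def eulerDeriv : Derivation ℝ ℝ⟦X⟧ ℝ⟦X⟧ :=
  (PowerSeries.X : ℝ⟦X⟧) • PowerSeries.derivative ℝ

lemma coeff_eulerDeriv (f : ℝ⟦X⟧) (m : ℕ) : coeff m (eulerDeriv f) = m * coeff m f := by
  cases m with
  | zero => simp [eulerDeriv]
  | succ m =>
    simp [eulerDeriv, PowerSeries.coeff_succ_X_mul, PowerSeries.coeff_derivative, mul_comm]

lemma eq_of_eulerDeriv_eq {f g : ℝ⟦X⟧} (h : eulerDeriv f = eulerDeriv g)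
    (h₀ : constantCoeff f = constantCoeff g) : f = g := by
  ext m
  cases m with
  | zero => simpa using h₀
  | succ m =>
    have coeff_eq := congrArg (coeff (m + 1)) h
    rw [coeff_eulerDeriv, coeff_eulerDeriv] at coeff_eq
    exact mul_left_cancel₀ (by positivity) coeff_eq

/-- The generating series `∑ₘ aₘ tᵐ`, where `aₘ` is the part of `ζ̄(k₁,…,kₙ)` with `m₁ = m`. -/
noncomputable def nmzetaSeries (ks : List ℕ) : ℝ⟦X⟧ := PowerSeries.mk (nmzetaTerm ks)

lemma nmzetaSeries_nil : nmzetaSeries [] = 1 := by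
  ext m
  cases m <;> simp [nmzetaSeries, nmzetaTerm, PowerSeries.coeff_one]

lemma constantCoeff_nmzetaSeries_cons (k : ℕ) (ks : List ℕ) :
    constantCoeff (nmzetaSeries (k :: ks)) = 0 := by
  simp [nmzetaSeries, ← PowerSeries.coeff_zero_eq_constantCoeff_apply, nmzetaTerm_cons_zero]

lemma eulerDeriv_nmzetaSeries_succ_cons (k : ℕ) (ks : List ℕ) :
    eulerDeriv (nmzetaSeries ((k + 1) :: ks)) = nmzetaSeries (k :: ks) := by
  ext m
  rw [coeff_eulerDeriv, nmzetaSeries, nmzetaSeries, PowerSeries.coeff_mk, PowerSeries.coeff_mk]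
  cases m with
  | zero => simp [nmzetaTerm_cons_zero]
  | succ m =>
    rw [nmzetaTerm_cons_succ, nmzetaTerm_cons_succ, pow_succ']
    field_simp

lemma coeff_mk_one_mul (f : ℝ⟦X⟧) (m : ℕ) :
    coeff m (PowerSeries.mk 1 * f) = ∑ j ∈ Finset.range (m + 1), coeff j f := by
  rw [mul_comm, PowerSeries.coeff_mul, Finset.Nat.sum_antidiagonal_eq_sum_range_succ_mk]
  simp

lemma eulerDeriv_nmzetaSeries_one_cons (ks : List ℕ) :
    eulerDeriv (nmzetaSeries (1 :: ks)) =
      PowerSeries.mk 1 * nmzetaSeries ks - PowerSeries.C (constantCoeff (nmzetaSeries ks)) := by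
  ext m
  rw [coeff_eulerDeriv, map_sub, coeff_mk_one_mul]
  cases m with
  | zero => simp
  | succ m =>
    simp only [nmzetaSeries, PowerSeries.coeff_mk, PowerSeries.coeff_C, nmzetaTerm_cons_succ,
      nmzetaTrunc]
    field_simp
    simp

/-- The linear extension of `z_{k₁}⋯z_{kₙ} ↦ nmzetaSeries [k₁,…,kₙ]`. -/
noncomputable def genSeries : H →ₗ[ℚ] ℝ⟦X⟧ := wordBasis.constr ℚ fun w => nmzetaSeries (toZ w)

lemma genSeries_word (w : FreeMonoid Letter) : genSeries (word w) = nmzetaSeries (toZ w) :=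
  constr_word _ w

lemma genSeries_nil : genSeries (word (ofList [])) = 1 :=
  (genSeries_word _).trans nmzetaSeries_nil

/-- The factor by which prepending a letter to a word acts on `eulerDeriv ∘ genSeries`. -/
noncomputable def letterSeries : Letter → ℝ⟦X⟧
  | Letter.x => 1
  | Letter.y => PowerSeries.mk 1

lemma constantCoeff_genSeries_word {l : List Letter} (hl : IsH1Word l) :
    constantCoeff (genSeries (word (ofList l))) = δ l := by
  obtain rfl | hl := hl
  · rw [genSeries_nil, map_one, δ, Rat.cast_one]
  · obtain ⟨k, ks, hks, hl'⟩ := exists_eq_zListW_cons hl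
    rw [genSeries_word, hl', toZ_zListW (by simpa using hks), constantCoeff_nmzetaSeries_cons,
      δ_eq_zero hl, Rat.cast_zero]

lemma eulerDeriv_genSeries_word {u : Letter} {l : List Letter} (hl : [Letter.y] <:+ u :: l) :
    eulerDeriv (genSeries (word (ofList (u :: l)))) =
      letterSeries u * genSeries (word (ofList l)) - δ l • 1 := by
  cases u with
  | y =>
    have toZ_eq : toZ (ofList (Letter.y :: l)) = 1 :: toZ (ofList l) := rfl
    rw [genSeries_word, toZ_eq, eulerDeriv_nmzetaSeries_one_cons, ← genSeries_word,
      constantCoeff_genSeries_word (isH1Word_of_cons hl), letterSeries,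
      Algebra.smul_def, mul_one, PowerSeries.algebraMap_apply, eq_ratCast]
  | x =>
    have hl : [Letter.y] <:+ l := by simpa [List.suffix_cons_iff] using hl
    obtain ⟨k, ks, hks, hl'⟩ := exists_eq_zListW_cons hl
    have hl'' : ofList (Letter.x :: l) = zListW ((k + 2) :: ks) := congrArg (of Letter.x * ·) hl'
    rw [genSeries_word, genSeries_word, hl', hl'', toZ_zListW (by simpa using hks),
      toZ_zListW (by simpa using hks), eulerDeriv_nmzetaSeries_succ_cons, δ_eq_zero hl,
      letterSeries, one_mul, zero_smul, sub_zero]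

lemma constantCoeff_genSeries_eq_zero {a : H} (ha : a ∈ Hy) :
    constantCoeff (genSeries a) = 0 := by
  refine Hy_le (V := LinearMap.ker (constantCoeff.toAddMonoidHom.toRatLinearMap ∘ₗ genSeries))
    (fun l hl => ?_) ha
  simpa [δ_eq_zero hl] using constantCoeff_genSeries_word (.inr hl)

lemma eulerDeriv_genSeries_mul (u : Letter) {a : H} (ha : a ∈ Hy) :
    eulerDeriv (genSeries (word (of u) * a)) = letterSeries u * genSeries a := by
  refine Hy_le (V := LinearMap.eqLocus
    ((eulerDeriv : ℝ⟦X⟧ →ₗ[ℝ] ℝ⟦X⟧).restrictScalars ℚ ∘ₗ genSeries ∘ₗ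
      LinearMap.mulLeft ℚ (word (of u)))
    (LinearMap.mulLeft ℚ (letterSeries u) ∘ₗ genSeries)) (fun l hl => ?_) ha
  have eulerDeriv_eq := eulerDeriv_genSeries_word (u := u) (hl.trans (List.suffix_cons u l))
  rw [δ_eq_zero hl, zero_smul, sub_zero] at eulerDeriv_eq
  rw [LinearMap.mem_eqLocus, LinearMap.comp_apply, LinearMap.comp_apply, LinearMap.mulLeft_apply,
    word_mul]
  exact eulerDeriv_eq

lemma δ_smul_word_τ_cons {u : Letter} {l : List Letter} (hl : [Letter.y] <:+ u :: l)
    (l' : List Letter) :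
    δ l • word (ofList (τ u :: l')) = δ l • word (ofList (Letter.x :: l')) := by
  obtain h | h := List.suffix_cons_iff.1 hl
  · obtain ⟨rfl, -⟩ := List.cons_eq_cons.1 h
    rfl
  · rw [δ_eq_zero h, zero_smul, zero_smul]

/-- Both sides vanish at `0` and have the same Euler derivative: the correction terms of `ш̄`
account for the terms `δ(w)` in `eulerDeriv_genSeries_word`. -/
lemma genSeries_nshW {l l' : List Letter} (hl : IsH1Word l) (hl' : IsH1Word l') :
    genSeries (nshW l l') = genSeries (word (ofList l)) * genSeries (word (ofList l')) := by
  induction l, l' using nshW.induct with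
  | case1 l' => rw [nshW, genSeries_nil, one_mul]
  | case2 u l => rw [nshW, genSeries_nil, mul_one]
  | case3 u l u' l' ih ih' =>
    have y_suffix : [Letter.y] <:+ u :: l := hl.resolve_left (List.cons_ne_nil u l)
    have y_suffix' : [Letter.y] <:+ u' :: l' := hl'.resolve_left (List.cons_ne_nil u' l')
    have tail_H1 : IsH1Word l := isH1Word_of_cons y_suffix
    have tail_H1' : IsH1Word l' := isH1Word_of_cons y_suffix'
    refine eq_of_eulerDeriv_eq ?_ ?_
    · rw [nshW, δ_smul_word_τ_cons y_suffix, δ_smul_word_τ_cons y_suffix', ← X_mul_word,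
        ← X_mul_word]
      simp only [map_sub, map_add, map_smul, map_rat_smul]
      rw [eulerDeriv_genSeries_mul u (nshW_mem_Hy tail_H1 hl' (by simp)),
        eulerDeriv_genSeries_mul u' (nshW_mem_Hy hl tail_H1' (by simp)), X,
        eulerDeriv_genSeries_mul _ (word_mem_Hy y_suffix),
        eulerDeriv_genSeries_mul _ (word_mem_Hy y_suffix'), ih tail_H1 hl', ih' hl tail_H1',
        Derivation.leibniz, eulerDeriv_genSeries_word y_suffix,
        eulerDeriv_genSeries_word y_suffix']
      simp only [letterSeries, one_mul, smul_eq_mul, mul_sub, mul_smul_comm, mul_one]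
      ring
    · rw [constantCoeff_genSeries_eq_zero (nshW_mem_Hy hl hl' (by simp)), map_mul,
        constantCoeff_genSeries_eq_zero (word_mem_Hy y_suffix), zero_mul]

end H

end GeneratingSeries

/-! ### The n-shuffle product: Abel summation -/

section Shuffle

namespace H

open FreeMonoid (ofList)

open Filter Topology

open PowerSeries (coeff)

/-- The weights of Abel summation: `tᵐ` with `0 ≤ t < 1`. -/
def abelWeight (t : Set.Ico (0 : ℝ) 1) (m : ℕ) : ℝ := (t : ℝ) ^ m

lemma summable_norm_nmzetaTerm_mul_abelWeight (ks : List ℕ) (t : Set.Ico (0 : ℝ) 1) :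
    Summable fun m => ‖nmzetaTerm ks m * abelWeight t m‖ :=
  (summable_nmzetaTerm_mul_pow ks (by simpa [abs_of_nonneg t.2.1] using t.2.2)).norm

lemma hasSum_coeff_genSeries_mul_abelWeight (a : H) (t : Set.Ico (0 : ℝ) 1) :
    HasSum (fun m => coeff m (genSeries a) * abelWeight t m) (weightedEval abelWeight a t) := by
  have ha : a ∈ Submodule.span ℚ (Set.range word) := span_word ▸ Submodule.mem_top
  induction ha using Submodule.span_induction with
  | mem a ha =>
    obtain ⟨w, rfl⟩ := ha
    simp only [genSeries_word, weightedEval_word, nmzetaSeries, PowerSeries.coeff_mk]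
    exact (summable_norm_nmzetaTerm_mul_abelWeight _ t).of_norm.hasSum
  | zero => simp
  | add a b _ _ ha hb => simpa only [map_add, add_mul, Pi.add_apply] using ha.add hb
  | smul c a _ ha =>
    simpa only [map_smul, map_rat_smul, smul_mul_assoc, Pi.smul_apply] using ha.const_smul c

lemma weightedEval_abelWeight_nshW {l l' : List Letter} (hl : IsH1Word l) (hl' : IsH1Word l') :
    weightedEval abelWeight (nshW l l') =
      weightedEval abelWeight (word (ofList l)) * weightedEval abelWeight (word (ofList l')) := by
  ext t
  rw [Pi.mul_apply, ← (hasSum_coeff_genSeries_mul_abelWeight _ t).tsum_eq, genSeries_nshW hl hl',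
    weightedEval_word, weightedEval_word, tsum_mul_tsum_eq_tsum_sum_antidiagonal_of_summable_norm
      (summable_norm_nmzetaTerm_mul_abelWeight _ t) (summable_norm_nmzetaTerm_mul_abelWeight _ t)]
  refine tsum_congr fun m => ?_
  rw [PowerSeries.coeff_mul, Finset.sum_mul]
  refine Finset.sum_congr rfl fun p hp => ?_
  simp only [genSeries_word, nmzetaSeries, PowerSeries.coeff_mk, abelWeight,
    ← Finset.HasAntidiagonal.mem_antidiagonal.1 hp, pow_add]
  ring

lemma weightedEval_abelWeight_nshLin : ∀ a ∈ H1, ∀ b ∈ H1,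
    weightedEval abelWeight (nshLin a b) =
      weightedEval abelWeight a * weightedEval abelWeight b := by
  refine map_mul_of_map_mul_word fun v w hv hw => ?_
  rw [nshLin_word]
  exact weightedEval_abelWeight_nshW hv hw

lemma weightedEval_abelWeight_Y :
    weightedEval abelWeight Y = fun t : Set.Ico (0 : ℝ) 1 => -Real.log (1 - t) := by
  ext t
  have weightedEval_eq : weightedEval abelWeight Y t = ∑' m, nmzetaTerm [1] m * abelWeight t m :=
    congrFun (weightedEval_word _ _) t
  have hasSum_log := Real.hasSum_pow_div_log_of_abs_lt_one (x := t)
    ((abs_of_nonneg t.2.1).trans_lt t.2.2)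
  rw [weightedEval_eq, (summable_norm_nmzetaTerm_mul_abelWeight [1] t).of_norm.tsum_eq_zero_add,
    nmzetaTerm_cons_zero, zero_mul, zero_add, ← hasSum_log.tsum_eq]
  refine tsum_congr fun m => ?_
  rw [nmzetaTerm_cons_succ, nmzetaTrunc_nil, abelWeight, Pi.one_apply, mul_one, pow_one,
    Nat.cast_succ, div_eq_inv_mul]

lemma tendsto_neg_log_one_sub :
    Tendsto (fun t : Set.Ico (0 : ℝ) 1 => -Real.log (1 - t)) (comap Subtype.val (𝓝 1)) atTop := by
  refine tendsto_neg_atBot_atTop.comp (Real.tendsto_log_nhdsGT_zero.comp ?_)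
  refine tendsto_nhdsWithin_iff.2 ⟨?_, .of_forall fun t => sub_pos.2 t.2.2⟩
  have tendsto_val :
      Tendsto Subtype.val (comap (Subtype.val : Set.Ico (0 : ℝ) 1 → ℝ) (𝓝 1)) (𝓝 1) :=
    tendsto_comap
  simpa using tendsto_val.const_sub 1

lemma abs_one_sub_abelWeight_le {r : ℝ} (hr₀ : 0 ≤ r) (hr₁ : r ≤ 1) (t : Set.Ico (0 : ℝ) 1)
    (m : ℕ) :
    |1 - abelWeight t m| ≤ (m * (1 * Real.exp (-(-Real.log (1 - t))))) ^ r := by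
  obtain ⟨t, ht₀, ht₁⟩ := t
  have bernoulli : 1 - t ^ m ≤ m * (1 - t) := by
    have one_add_le := one_add_mul_le_pow (a := t - 1) (by linarith) m
    rw [add_sub_cancel] at one_add_le
    linarith
  have nonneg : 0 ≤ 1 - t ^ m := sub_nonneg.2 (pow_le_one₀ ht₀ ht₁.le)
  have le_one : 1 - t ^ m ≤ 1 := sub_le_self 1 (pow_nonneg ht₀ m)
  rw [neg_neg, Real.exp_log (sub_pos.2 ht₁), one_mul, abelWeight, abs_of_nonneg nonneg]
  exact (Real.self_le_rpow_of_le_one nonneg le_one hr₁).trans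
    (Real.rpow_le_rpow nonneg bernoulli hr₀)

theorem exists_isRegHom_nsh : ∃ f, IsRegHom nsh Zbar f := by
  have : (comap (Subtype.val : Set.Ico (0 : ℝ) 1 → ℝ) (𝓝 1)).NeBot :=
    mem_closure_iff_comap_neBot.1 (by simp [closure_Ico zero_ne_one])
  rw [nsh_eq_nshLin]
  refine exists_isRegHom (l := comap Subtype.val (𝓝 1)) (ev := weightedEval abelWeight)
    insertsY_nshLin ?_ weightedEval_abelWeight_nshLin ?_ <;> rw [weightedEval_abelWeight_Y]
  · exact tendsto_neg_log_one_sub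
  · exact hasPolyExpansion_weightedEval (r := 1 / 2) zero_le_one (by norm_num) (by norm_num)
      tendsto_neg_log_one_sub (abs_one_sub_abelWeight_le (by norm_num) (by norm_num))

end H

end Shuffle

/-- There exist ℚ-algebra homomorphisms `Z̄^{*̄} : (H¹, *̄) → ℝ[T]` and
`Z̄^{ш̄} : (H¹, ш̄) → ℝ[T]` extending `Z̄` and sending `y` to `T`, and they are
unique (as maps on `H¹`). -/
theorem reg_homs_exist_unique :
    (∃ f : H →ₗ[ℚ] Polynomial ℝ, IsRegHom nharm Zbar f ∧
      ∀ g : H →ₗ[ℚ] Polynomial ℝ, IsRegHom nharm Zbar g → ∀ a ∈ H1, g a = f a) ∧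
    (∃ f : H →ₗ[ℚ] Polynomial ℝ, IsRegHom nsh Zbar f ∧
      ∀ g : H →ₗ[ℚ] Polynomial ℝ, IsRegHom nsh Zbar g → ∀ a ∈ H1, g a = f a) := by
  obtain ⟨f, hf⟩ := exists_isRegHom_nharm
  obtain ⟨f', hf'⟩ := exists_isRegHom_nsh
  refine ⟨⟨f, hf, fun g hg => ?_⟩, ⟨f', hf', fun g hg => ?_⟩⟩
  · rw [nharm_eq_nharmLin] at hf hg
    exact eqOn_H1_of_isRegHom insertsY_nharmLin hf hg
  · rw [nsh_eq_nshLin] at hf' hg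
    exact eqOn_H1_of_isRegHom insertsY_nshLin hf' hg
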